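/- arXiv:1803.07974 — 4 statements merged into one kernel-verified Lean document; each statement's English description precedes it below -/
import Mathlib

section
/- Let N : V → ℂ^δ be a linear map that covers a truncated normal form on V with respect to I (i.e., there exist a TNF 𝒩₀ : V → B₀ on V w.r.t. I and a ℂ-linear isomorphism P : B₀ → ℂ^δ with N = P ∘ 𝒩₀). Then for any δ-dimensional ℂ-subspace B ⊆ W = {f ∈ V : x_i·f ∈ V for i = 1,…,n} such that the restriction N|_B : B → ℂ^δ is bijective, the map 𝒩 = (N|_B)^{-1} ∘ N : V → B is a truncated normal form on V with respect to I. -/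
open MvPolynomial

/-- A truncated normal form (TNF) on `V` w.r.t. `I`: a surjective `ℂ`-linear map
`𝒩 : V → B` where `B ⊆ V`, `dim_ℂ B = δ`, `x_i · B ⊆ V` for all `i`,
`ker 𝒩 = I ∩ V`, and `𝒩` restricted to `B` is the identity on `B`. -/
structure IsTNF (n δ : ℕ) (I : Ideal (MvPolynomial (Fin n) ℂ))
    (V B : Submodule ℂ (MvPolynomial (Fin n) ℂ)) (𝒩 : V →ₗ[ℂ] B) : Prop where
  hBV : B ≤ V
  hdim : Module.finrank ℂ B = δ
  hmul : ∀ b ∈ B, ∀ i : Fin n, MvPolynomial.X i * b ∈ V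
  hsurj : Function.Surjective 𝒩
  hker : LinearMap.ker 𝒩 = Submodule.comap V.subtype (Submodule.restrictScalars ℂ I)
  hid : ∀ v : V, (v : MvPolynomial (Fin n) ℂ) ∈ B →
    ((𝒩 v : B) : MvPolynomial (Fin n) ℂ) = (v : MvPolynomial (Fin n) ℂ)

/-- `N : V → ℂ^δ` covers a TNF if `N = P ∘ 𝒩₀` for some TNF `𝒩₀ : V → B₀` and
some `ℂ`-linear isomorphism `P : B₀ → ℂ^δ`. -/
def CoversTNF (n δ : ℕ) (I : Ideal (MvPolynomial (Fin n) ℂ))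
    (V : Submodule ℂ (MvPolynomial (Fin n) ℂ)) (N : V →ₗ[ℂ] (Fin δ → ℂ)) : Prop :=
  ∃ (B₀ : Submodule ℂ (MvPolynomial (Fin n) ℂ)) (𝒩₀ : V →ₗ[ℂ] B₀)
    (P : B₀ ≃ₗ[ℂ] (Fin δ → ℂ)), IsTNF n δ I V B₀ 𝒩₀ ∧ ∀ v : V, N v = P (𝒩₀ v)

/-- if `N` covers a TNF on `V` w.r.t. `I`, then for any `δ`-dimensional
subspace `B ⊆ W = {f ∈ V : x_i f ∈ V, i = 1,…,n}` such that `N|_B` is bijective,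
the map `𝒩 = (N|_B)⁻¹ ∘ N : V → B` is a TNF on `V` w.r.t. `I`. -/
theorem stmt0 (n δ : ℕ) (I : Ideal (MvPolynomial (Fin n) ℂ))
    (hfin : FiniteDimensional ℂ (MvPolynomial (Fin n) ℂ ⧸ I))
    (hδ : Module.finrank ℂ (MvPolynomial (Fin n) ℂ ⧸ I) = δ)
    (V : Submodule ℂ (MvPolynomial (Fin n) ℂ))
    (N : V →ₗ[ℂ] (Fin δ → ℂ)) (hN : CoversTNF n δ I V N)
    (B : Submodule ℂ (MvPolynomial (Fin n) ℂ))
    (hBW : B ≤ V ⊓ ⨅ i : Fin n, Submodule.comap (LinearMap.mulLeft ℂ (X i)) V)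
    (hBdim : Module.finrank ℂ B = δ)
    (hBV : B ≤ V)
    (hbij : Function.Bijective (N ∘ₗ Submodule.inclusion hBV))
    (𝒩 : V →ₗ[ℂ] B)
    (h𝒩 : ∀ v : V, (N ∘ₗ Submodule.inclusion hBV) (𝒩 v) = N v) :
    IsTNF n δ I V B 𝒩 := by
  obtain ⟨B₀, 𝒩₀, P, h₀, hP⟩ := hN
  have hid : ∀ b : B, 𝒩 (Submodule.inclusion hBV b) = b := fun b => hbij.1 (h𝒩 _)
  refine ⟨hBV, hBdim, fun b hb i => ?_, fun b => ⟨_, hid b⟩, ?_, fun v hv => ?_⟩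
  · exact (Submodule.mem_iInf _).1 (hBW hb).2 i
  · rw [← h₀.hker]
    ext v
    rw [LinearMap.mem_ker, LinearMap.mem_ker, ← map_eq_zero_iff _ hbij.1, h𝒩, hP,
      LinearEquiv.map_eq_zero_iff]
  · exact congrArg Subtype.val (hid ⟨v, hv⟩)
end

section
/- Let N : V → ℂ^δ be a surjective ℂ-linear map. Then N covers a truncated normal form on V with respect to I (i.e., N = P ∘ 𝒩 for some TNF 𝒩 : V → B on V w.r.t. I and some ℂ-linear isomorphism P : B → ℂ^δ) if and only if the following three conditions hold: (a) there exists u ∈ V such that the residue class u + I is a unit in the ring R/I; (b) ker N ⊆ I ∩ V; (c) the restriction of N to W = {f ∈ V : x_i·f ∈ V for i = 1,…,n} is surjective onto ℂ^δ. -/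
open MvPolynomial

/-- A linear subspace of `R ⧸ I` stable under multiplication by the variables and containing a unit
is everything. -/
theorem eq_top_of_isUnit_mem_of_X_mul_mem {σ K : Type*} [CommRing K]
    (I : Ideal (MvPolynomial σ K)) (M : Submodule K (MvPolynomial σ K ⧸ I))
    (hX : ∀ i, ∀ m ∈ M, Ideal.Quotient.mk I (X i) * m ∈ M)
    {u : MvPolynomial σ K ⧸ I} (hu : IsUnit u) (huM : u ∈ M) : M = ⊤ := by
  have hmul : ∀ p : MvPolynomial σ K, ∀ m ∈ M, Ideal.Quotient.mk I p * m ∈ M := by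
    intro p
    induction p using MvPolynomial.induction_on with
    | C a =>
      intro m hm
      have h : Ideal.Quotient.mk I (C a) * m = a • m := (Algebra.smul_def a m).symm
      exact h ▸ M.smul_mem a hm
    | add p q hp hq =>
      intro m hm
      rw [map_add, add_mul]
      exact M.add_mem (hp m hm) (hq m hm)
    | mul_X p i hp =>
      intro m hm
      rw [map_mul, mul_assoc]
      exact hp _ (hX i m hm)
  refine Submodule.eq_top_iff'.2 fun y => ?_
  obtain ⟨w, hw⟩ := hu.exists_left_inv
  obtain ⟨p, hp⟩ := Ideal.Quotient.mk_surjective (y * w)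
  have h := hmul p u huM
  rwa [hp, mul_assoc, hw, mul_one] at h

/-- A truncated normal form identifies `B` with `R ⧸ I`, so `B` contains a representative of `1`. -/
theorem IsTNF.exists_mk_eq_one {n δ : ℕ} {I : Ideal (MvPolynomial (Fin n) ℂ)}
    [FiniteDimensional ℂ (MvPolynomial (Fin n) ℂ ⧸ I)]
    (hδ : Module.finrank ℂ (MvPolynomial (Fin n) ℂ ⧸ I) = δ)
    {V B : Submodule ℂ (MvPolynomial (Fin n) ℂ)} [FiniteDimensional ℂ V] {𝒩 : V →ₗ[ℂ] B}
    (h : IsTNF n δ I V B 𝒩) :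
    ∃ u ∈ B, Ideal.Quotient.mk I u = 1 := by
  have : FiniteDimensional ℂ B := Submodule.finiteDimensional_of_le h.hBV
  let f : B →ₗ[ℂ] MvPolynomial (Fin n) ℂ ⧸ I := (Ideal.Quotient.mkₐ ℂ I).toLinearMap ∘ₗ B.subtype
  have hinj : Function.Injective f := by
    refine (injective_iff_map_eq_zero f).2 fun b hb => ?_
    have hbI : (b : MvPolynomial (Fin n) ℂ) ∈ I := Ideal.Quotient.eq_zero_iff_mem.1 hb
    have hker : (⟨b, h.hBV b.2⟩ : V) ∈ LinearMap.ker 𝒩 := by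
      rw [h.hker]
      exact hbI
    have hb' := h.hid ⟨b, h.hBV b.2⟩ b.2
    rw [LinearMap.mem_ker.1 hker] at hb'
    exact Subtype.ext hb'.symm
  obtain ⟨b, hb⟩ := (LinearMap.injective_iff_surjective_of_finrank_eq_finrank
    (h.hdim.trans hδ.symm)).1 hinj 1
  exact ⟨b, b.2, hb⟩

/-- a surjective `N : V → ℂ^δ` covers a TNF on `V` w.r.t. `I` iff
(a) some `u ∈ V` has `u + I` a unit in `R/I`; (b) `ker N ⊆ I ∩ V`;
(c) `N` restricted to `W = {f ∈ V : x_i f ∈ V, i = 1,…,n}` is onto `ℂ^δ`. -/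
theorem stmt1 (n δ : ℕ) (I : Ideal (MvPolynomial (Fin n) ℂ))
    (hfin : FiniteDimensional ℂ (MvPolynomial (Fin n) ℂ ⧸ I))
    (hδ : Module.finrank ℂ (MvPolynomial (Fin n) ℂ ⧸ I) = δ)
    (V : Submodule ℂ (MvPolynomial (Fin n) ℂ)) (hVfin : FiniteDimensional ℂ V)
    (N : V →ₗ[ℂ] (Fin δ → ℂ)) (hNsurj : Function.Surjective N)
    (W : Submodule ℂ (MvPolynomial (Fin n) ℂ))
    (hW : W = V ⊓ ⨅ i : Fin n, Submodule.comap (LinearMap.mulLeft ℂ (X i)) V)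
    (hWV : W ≤ V) :
    CoversTNF n δ I V N ↔
      ((∃ u : V, IsUnit (Ideal.Quotient.mk I (u : MvPolynomial (Fin n) ℂ))) ∧
        (∀ v : V, N v = 0 → (v : MvPolynomial (Fin n) ℂ) ∈ I) ∧
        Function.Surjective (N ∘ₗ Submodule.inclusion hWV)) := by
  have memW : ∀ f, f ∈ W ↔ f ∈ V ∧ ∀ i, X i * f ∈ V := fun f => by simp [hW]
  constructor
  · rintro ⟨B, 𝒩, P, h, hN⟩
    refine ⟨?_, fun v hv => ?_, fun y => ?_⟩
    · obtain ⟨u, huB, hu⟩ := h.exists_mk_eq_one hδ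
      exact ⟨⟨u, h.hBV huB⟩, by simp [hu]⟩
    · have hv' : v ∈ LinearMap.ker 𝒩 := P.map_eq_zero_iff.1 ((hN v).symm.trans hv)
      rw [h.hker] at hv'
      exact hv'
    · have hb := (P.symm y).2
      refine ⟨⟨P.symm y, (memW _).2 ⟨h.hBV hb, h.hmul _ hb⟩⟩, ?_⟩
      have hid : 𝒩 ⟨P.symm y, h.hBV hb⟩ = P.symm y := Subtype.ext (h.hid ⟨_, h.hBV hb⟩ hb)
      change N ⟨P.symm y, h.hBV hb⟩ = y
      rw [hN, hid, P.apply_symm_apply]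
  · rintro ⟨⟨u, hu⟩, hker, hsurj⟩
    obtain ⟨s, hs⟩ := LinearMap.exists_rightInverse_of_surjective _ (LinearMap.range_eq_top.2 hsurj)
    have hNs : ∀ y, N (Submodule.inclusion hWV (s y)) = y := fun y => LinearMap.congr_fun hs y
    let g : (Fin δ → ℂ) →ₗ[ℂ] MvPolynomial (Fin n) ℂ := W.subtype ∘ₗ s
    have hgW : ∀ y, g y ∈ W := fun y => (s y).2
    have hNg : ∀ y, N ⟨g y, hWV (hgW y)⟩ = y := hNs
    let φ : (Fin δ → ℂ) →ₗ[ℂ] MvPolynomial (Fin n) ℂ ⧸ I :=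
      (Ideal.Quotient.mkₐ ℂ I).toLinearMap ∘ₗ g
    have hφ : ∀ v : V, φ (N v) = Ideal.Quotient.mk I v := fun v => by
      have hv := hker (v - ⟨g (N v), hWV (hgW _)⟩) (by rw [map_sub, hNg, sub_self])
      exact (Ideal.Quotient.eq.2 hv).symm
    have htop : LinearMap.range φ = ⊤ := by
      refine eq_top_of_isUnit_mem_of_X_mul_mem I _ ?_ hu ⟨N u, hφ u⟩
      rintro i _ ⟨y, rfl⟩
      exact ⟨_, (hφ ⟨X i * g y, ((memW _).1 (hgW y)).2 i⟩).trans (map_mul _ _ _)⟩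
    have hφinj : Function.Injective φ :=
      (LinearMap.injective_iff_surjective_of_finrank_eq_finrank (by simp [hδ])).2
        (LinearMap.range_eq_top.1 htop)
    have hginj : Function.Injective g := fun a b hab => by
      rw [← hNg a, ← hNg b]
      simp only [hab]
    let e := LinearEquiv.ofInjective g hginj
    refine ⟨LinearMap.range g, e.toLinearMap ∘ₗ N, e.symm, ⟨?_, ?_, ?_, ?_, ?_, ?_⟩,
      fun v => (e.symm_apply_apply _).symm⟩
    · rintro _ ⟨y, rfl⟩
      exact hWV (hgW y)
    · rw [← e.finrank_eq, Module.finrank_fin_fun]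
    · rintro _ ⟨y, rfl⟩
      exact ((memW _).1 (hgW y)).2
    · exact e.surjective.comp hNsurj
    · rw [LinearEquiv.ker_comp]
      ext v
      refine ⟨hker v, fun hv => hφinj ?_⟩
      rw [hφ, map_zero]
      exact Ideal.Quotient.eq_zero_iff_mem.2 hv
    · rintro ⟨_, _⟩ ⟨y, rfl⟩
      exact congrArg g (hNg y)
end

section
/- Let I ⊆ R = ℂ[x₁,…,xₙ] be an ideal with dim_ℂ(R/I) = δ' < ∞ whose set of common zeros consists of r distinct points ξ₁,…,ξ_r ∈ ℂⁿ. Let V ⊆ R be a finite-dimensional subspace and N : V → ℂ^δ a surjective ℂ-linear map with ker N ⊆ I ∩ V. Let W' ⊆ V' ⊆ V be subspaces satisfying: (1) the composite ℂ-linear map W' ↪ R → R/I is surjective; (2) x_j·f ∈ V' for every f ∈ W' and every j = 1,…,n; (3) rank(N|_{W'}) = rank(N|_{V'}). Let B' ⊆ W' be a subspace with dim_ℂ B' = rank(N|_{B'}) = rank(N|_{W'}). Define N₀ : B' → ℂ^δ by N₀(b) = N(b) and, for j = 1,…,n, N_j : B' → ℂ^δ by N_j(b) = N(x_j·b). Then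 for each i = 1,…,r there exists a nonzero vector v_i ∈ ℂ^δ such that for every j = 1,…,n and every b ∈ B', ⟨v_i, N_j(b)⟩ = ξ_{i,j}·⟨v_i, N₀(b)⟩, where ξ_{i,j} is the j-th coordinate of ξ_i and ⟨·,·⟩ is the standard bilinear pairing on ℂ^δ. Consequently, the rank of the linear map B' → ℂ^δ given by b ↦ N_j(b) − ξ_{i,j}·N₀(b) is strictly less than dim_ℂ B'. -/
open MvPolynomial

/-- The rank of the restriction of `N : V → ℂ^δ` to a subspace `L ⊆ V`
(given as a subspace of the ambient polynomial ring). -/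
noncomputable def restRank (n δ : ℕ) (V : Submodule ℂ (MvPolynomial (Fin n) ℂ))
    (N : V →ₗ[ℂ] (Fin δ → ℂ)) (L : Submodule ℂ (MvPolynomial (Fin n) ℂ)) : ℕ :=
  Module.finrank ℂ (Submodule.map N (Submodule.comap V.subtype L))

/-- A linear functional that vanishes on the kernel of a surjective linear map factors through it. -/
theorem exists_functional_comp_eq {K E F : Type*} [Field K] [AddCommGroup E] [Module K E]
    [AddCommGroup F] [Module K F] (N : E →ₗ[K] F) (hN : Function.Surjective N) (e : E →ₗ[K] K)
    (he : ∀ v, N v = 0 → e v = 0) : ∃ φ : F →ₗ[K] K, ∀ v, φ (N v) = e v := by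
  obtain ⟨g, hg⟩ := N.exists_rightInverse_of_surjective (LinearMap.range_eq_top.2 hN)
  refine ⟨e ∘ₗ g, fun v => ?_⟩
  have h := he (g (N v) - v) (by
    rw [map_sub, sub_eq_zero]
    exact LinearMap.congr_fun hg (N v))
  rwa [map_sub, sub_eq_zero] at h

/-- eigenvector structure of the pencils `N_j − ξ_{i,j} N₀` for a
non-generic zero-dimensional system. -/
theorem stmt2 (n δ δ' r : ℕ) (I : Ideal (MvPolynomial (Fin n) ℂ))
    (hfin : FiniteDimensional ℂ (MvPolynomial (Fin n) ℂ ⧸ I))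
    (hδ' : Module.finrank ℂ (MvPolynomial (Fin n) ℂ ⧸ I) = δ')
    (ξ : Fin r → (Fin n → ℂ)) (hdist : Function.Injective ξ)
    (hzeros : {z : Fin n → ℂ | ∀ f ∈ I, MvPolynomial.eval z f = 0} = Set.range ξ)
    (V : Submodule ℂ (MvPolynomial (Fin n) ℂ)) (hVfin : FiniteDimensional ℂ V)
    (N : V →ₗ[ℂ] (Fin δ → ℂ)) (hNsurj : Function.Surjective N)
    (hker : ∀ v : V, N v = 0 → (v : MvPolynomial (Fin n) ℂ) ∈ I)
    (W' V' : Submodule ℂ (MvPolynomial (Fin n) ℂ))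
    (hW'V' : W' ≤ V') (hV'V : V' ≤ V)
    -- condition 1: the composite `W' ↪ R → R/I` is surjective
    (hcond1 : Function.Surjective
      (fun w : W' => Ideal.Quotient.mk I (w : MvPolynomial (Fin n) ℂ)))
    -- condition 2: `x_j · W' ⊆ V'`
    (hcond2 : ∀ f ∈ W', ∀ j : Fin n, MvPolynomial.X j * f ∈ V')
    -- condition 3: `rank(N|_{W'}) = rank(N|_{V'})`
    (hcond3 : restRank n δ V N W' = restRank n δ V N V')
    (B' : Submodule ℂ (MvPolynomial (Fin n) ℂ)) (hB'W' : B' ≤ W')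
    (hB'dim : Module.finrank ℂ B' = restRank n δ V N B')
    (hB'rk : restRank n δ V N B' = restRank n δ V N W') :
    ∀ i : Fin r,
      (∃ v : Fin δ → ℂ, v ≠ 0 ∧
        ∀ j : Fin n, ∀ b : V, (b : MvPolynomial (Fin n) ℂ) ∈ B' →
          ∀ hxb : MvPolynomial.X j * (b : MvPolynomial (Fin n) ℂ) ∈ V,
            (∑ k, v k * N (⟨MvPolynomial.X j * (b : MvPolynomial (Fin n) ℂ), hxb⟩ : V) k)
              = ξ i j * (∑ k, v k * N b k)) ∧
      (∀ j : Fin n, ∀ M : (Submodule.comap V.subtype B') →ₗ[ℂ] (Fin δ → ℂ),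
        (∀ b : Submodule.comap V.subtype B',
          ∀ hxb : MvPolynomial.X j * ((b : V) : MvPolynomial (Fin n) ℂ) ∈ V,
            M b = N (⟨MvPolynomial.X j * ((b : V) : MvPolynomial (Fin n) ℂ), hxb⟩ : V)
              - ξ i j • N (b : V)) →
        Module.finrank ℂ (LinearMap.range M) < Module.finrank ℂ B') := by
  intro i
  have hξ : ∀ f ∈ I, eval (ξ i) f = 0 := by
    have h : ξ i ∈ {z : Fin n → ℂ | ∀ f ∈ I, MvPolynomial.eval z f = 0} :=
      hzeros ▸ Set.mem_range_self i
    exact h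
  obtain ⟨φ, hφ⟩ := exists_functional_comp_eq N hNsurj
    ((aeval (R := ℂ) (ξ i)).toLinearMap ∘ₗ V.subtype)
    (fun v hv => by simpa [aeval_eq_eval] using hξ _ (hker v hv))
  replace hφ : ∀ v : V, φ (N v) = eval (ξ i) (v : MvPolynomial (Fin n) ℂ) := fun v => by
    simp [hφ, aeval_eq_eval]
  obtain ⟨w, hw⟩ := hcond1 1
  have hwV : (w : MvPolynomial (Fin n) ℂ) ∈ V := hV'V (hW'V' w.2)
  have hφw : φ (N ⟨w, hwV⟩) = 1 := by
    rw [hφ]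
    have h := hξ _ (Ideal.Quotient.eq.1 (hw.trans (map_one (Ideal.Quotient.mk I)).symm))
    rwa [map_sub, map_one, sub_eq_zero] at h
  have hpair : ∀ y : Fin δ → ℂ, ∑ k, φ (Pi.single k 1) * y k = φ y := fun y => by
    rw [LinearMap.pi_apply_eq_sum_univ φ y]
    exact Finset.sum_congr rfl fun k _ => by
      rw [smul_eq_mul, mul_comm]
      congr 2
      ext l
      simp [Pi.single_apply, eq_comm]
  refine ⟨⟨fun k => φ (Pi.single k 1), fun h => ?_, fun j b _ hxb => ?_⟩, fun j M hM => ?_⟩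
  · have h1 := hpair (N ⟨w, hwV⟩)
    rw [hφw] at h1
    simp [fun k => congrFun h k] at h1
  · simp only [hpair, hφ, map_mul, eval_X]
  · have hBV : Submodule.map N (Submodule.comap V.subtype B') =
        Submodule.map N (Submodule.comap V.subtype V') :=
      Submodule.eq_of_le_of_finrank_eq
        (Submodule.map_mono (Submodule.comap_mono (hB'W'.trans hW'V'))) (hB'rk.trans hcond3)
    rw [hB'dim, restRank, hBV]
    have hXV' : ∀ b : Submodule.comap V.subtype B',
        X j * ((b : V) : MvPolynomial (Fin n) ℂ) ∈ V' := fun b => hcond2 _ (hB'W' b.2) j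
    refine Submodule.finrank_lt_finrank_of_lt (SetLike.lt_iff_le_and_exists.2
      ⟨?_, N ⟨w, hwV⟩, Submodule.mem_map_of_mem (hW'V' w.2), ?_⟩)
    · rintro _ ⟨b, rfl⟩
      rw [hM b (hV'V (hXV' b))]
      exact Submodule.sub_mem _ (Submodule.mem_map_of_mem (hXV' b))
        (Submodule.smul_mem _ _ (Submodule.mem_map_of_mem (hW'V' (hB'W' b.2))))
    · rintro ⟨b, hb⟩
      rw [← hb, hM b (hV'V (hXV' b)), map_sub, map_smul, hφ, hφ] at hφw
      simp at hφw
end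

section
/- Let N : V → ℂ^δ cover a truncated normal form on V with respect to I, and let B ⊆ W = {f ∈ V : x_i·f ∈ V for i = 1,…,n} be a δ-dimensional subspace such that N|_B : B → ℂ^δ is bijective. For each i = 1,…,n define M_{x_i} : B → B by M_{x_i}(b) = (N|_B)^{-1}(N(x_i·b)). Then, with φ : B → R/I the map sending b to b + I, φ is a ℂ-linear isomorphism and φ(M_{x_i}(b)) = (x_i + I)·φ(b) for every b ∈ B; that is, M_{x_i} is the matrix of multiplication by x_i on R/I in the basis B. -/
open MvPolynomial

/-- A map covering a truncated normal form has kernel `I ∩ V`. -/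
theorem CoversTNF.apply_eq_zero_iff {n δ : ℕ} {I : Ideal (MvPolynomial (Fin n) ℂ)}
    {V : Submodule ℂ (MvPolynomial (Fin n) ℂ)} {N : V →ₗ[ℂ] (Fin δ → ℂ)}
    (hN : CoversTNF n δ I V N) (v : V) :
    N v = 0 ↔ (v : MvPolynomial (Fin n) ℂ) ∈ I := by
  obtain ⟨B₀, 𝒩₀, P, h, hP⟩ := hN
  rw [hP, LinearEquiv.map_eq_zero_iff, ← LinearMap.mem_ker, h.hker]
  rfl

/-- Two elements of `V` have the same image under a map covering a truncated normal form
iff they are congruent modulo `I`. -/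
theorem CoversTNF.apply_eq_iff {n δ : ℕ} {I : Ideal (MvPolynomial (Fin n) ℂ)}
    {V : Submodule ℂ (MvPolynomial (Fin n) ℂ)} {N : V →ₗ[ℂ] (Fin δ → ℂ)}
    (hN : CoversTNF n δ I V N) (v w : V) :
    N v = N w ↔ Ideal.Quotient.mk I (v : MvPolynomial (Fin n) ℂ) =
      Ideal.Quotient.mk I (w : MvPolynomial (Fin n) ℂ) := by
  rw [Ideal.Quotient.eq, ← sub_eq_zero, ← map_sub, hN.apply_eq_zero_iff]
  rfl

/-- if `N` covers a TNF and `B ⊆ W` is `δ`-dimensional with `N|_B`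
bijective, then `M_{x_i} = (N|_B)⁻¹ ∘ N(x_i·) : B → B` represents multiplication by
`x_i` on `R/I` via the isomorphism `φ : B → R/I`, `b ↦ b + I`. -/
theorem stmt13 (n δ : ℕ) (I : Ideal (MvPolynomial (Fin n) ℂ))
    (hfin : FiniteDimensional ℂ (MvPolynomial (Fin n) ℂ ⧸ I))
    (hδ : Module.finrank ℂ (MvPolynomial (Fin n) ℂ ⧸ I) = δ)
    (V : Submodule ℂ (MvPolynomial (Fin n) ℂ))
    (N : V →ₗ[ℂ] (Fin δ → ℂ)) (hN : CoversTNF n δ I V N)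
    (B : Submodule ℂ (MvPolynomial (Fin n) ℂ))
    (hBW : B ≤ V ⊓ ⨅ i : Fin n, Submodule.comap (LinearMap.mulLeft ℂ (X i)) V)
    (hBdim : Module.finrank ℂ B = δ) (hBV : B ≤ V)
    (hbij : Function.Bijective (N ∘ₗ Submodule.inclusion hBV))
    (i : Fin n) (Mxi : B →ₗ[ℂ] B)
    (hMxi : ∀ b : B, ∀ hb : MvPolynomial.X i * (b : MvPolynomial (Fin n) ℂ) ∈ V,
      (N ∘ₗ Submodule.inclusion hBV) (Mxi b)
        = N (⟨MvPolynomial.X i * (b : MvPolynomial (Fin n) ℂ), hb⟩ : V)) :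
    Function.Bijective
        (fun b : B => Ideal.Quotient.mk I ((b : MvPolynomial (Fin n) ℂ))) ∧
      ∀ b : B,
        Ideal.Quotient.mk I ((Mxi b : B) : MvPolynomial (Fin n) ℂ)
          = Ideal.Quotient.mk I (MvPolynomial.X i)
            * Ideal.Quotient.mk I ((b : MvPolynomial (Fin n) ℂ)) := by
  constructor
  · have : FiniteDimensional ℂ B :=
      (LinearEquiv.ofBijective _ hbij).symm.finiteDimensional
    let φ : B →ₗ[ℂ] MvPolynomial (Fin n) ℂ ⧸ I :=
      (Ideal.Quotient.mkₐ ℂ I).toLinearMap ∘ₗ B.subtype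
    have hinj : Function.Injective φ := fun b c h =>
      hbij.injective ((hN.apply_eq_iff (Submodule.inclusion hBV b)
        (Submodule.inclusion hBV c)).2 h)
    exact ⟨hinj, (LinearMap.injective_iff_surjective_of_finrank_eq_finrank
      (hBdim.trans hδ.symm)).1 hinj⟩
  · intro b
    have hb : X i * (b : MvPolynomial (Fin n) ℂ) ∈ V :=
      (Submodule.mem_iInf _).1 (hBW b.2).2 i
    rw [← map_mul]
    exact (hN.apply_eq_iff (Submodule.inclusion hBV (Mxi b)) ⟨_, hb⟩).1 (hMxi b hb)
end
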